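/- Let Ω ⊆ ℝ² be an open set, let θ : Ω → (0,π) be smooth with θ ≠ π/2 everywhere, and let Λᵘ, Λᵛ : Ω → ℝ and κᵘ, κᵛ : Ω → (0,∞) be smooth. Define ρ = ln|tan θ|, C₂ᵘ = (∂_u κᵘ)/κᵘ + 2Λᵘ, C₂ᵛ = (∂_v κᵛ)/κᵛ + 2Λᵛ, G² = cos²θ·κᵘ·κᵛ, R = ∂_u∂_v ρ + cos²θ·(∂_u ρ)(∂_v ρ) − Λᵛ·∂_u ρ − Λᵘ·∂_v ρ, and R̃ = cot θ·( ∂_u(−tan θ·Λᵛ) − ∂_v(tan θ·Λᵘ − ∂_u θ) ). Then the identity 2R = 2R̃ + ∂_v C₂ᵘ + ∂_u C₂ᵛ − ∂_u∂_v ln(G²) holds on Ω. -/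

import Mathlib

/-!
Write `s`, `c` for `sin θ`, `cos θ`. On `Ω` the first derivatives of `ρ = ln |tan θ|` are
`θ_u / (s c)` and `θ_v / (s c)`, and `(ln G²)_v = -2 (s / c) θ_v + (κᵘ)_v / κᵘ + (κᵛ)_v / κᵛ`.
Differentiating once more expresses both sides of the identity as rational functions of `s`, `c`,
`Λᵘ`, `Λᵛ`, `κᵘ`, `κᵛ` and their partial derivatives. After the mixed second derivatives of `θ` and
`κᵘ` are identified (`pdv_pdu_comm`), the two sides agree by `s² + c² = 1`: both `2 (R - R̃)`
and `(C₂ᵘ)_v + (C₂ᵛ)_u - (ln G²)_{uv}` equal `2 (((s / c) θ_v)_u + (Λᵘ)_v + (Λᵛ)_u)`.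
-/

open Real Set
open scoped ContDiff

/-- Partial derivative in the first variable of `ℝ²`. -/
noncomputable def pdu (f : ℝ × ℝ → ℝ) (p : ℝ × ℝ) : ℝ := deriv (fun t => f (t, p.2)) p.1

/-- Partial derivative in the second variable of `ℝ²`. -/
noncomputable def pdv (f : ℝ × ℝ → ℝ) (p : ℝ × ℝ) : ℝ := deriv (fun t => f (p.1, t)) p.2

section PartialDerivatives

variable {Ω : Set (ℝ × ℝ)} {f g : ℝ × ℝ → ℝ} {p : ℝ × ℝ}

lemma hasDerivAt_slice_u (h : DifferentiableAt ℝ f p) :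
    HasDerivAt (fun t => f (t, p.2)) (fderiv ℝ f p (1, 0)) p.1 := by
  have h1 : HasDerivAt (fun t : ℝ => (t, p.2)) ((1 : ℝ), (0 : ℝ)) p.1 :=
    (hasDerivAt_id p.1).prodMk (hasDerivAt_const p.1 p.2)
  exact HasFDerivAt.comp_hasDerivAt (f := fun t : ℝ => (t, p.2)) p.1 h.hasFDerivAt h1

lemma hasDerivAt_slice_v (h : DifferentiableAt ℝ f p) :
    HasDerivAt (fun t => f (p.1, t)) (fderiv ℝ f p (0, 1)) p.2 := by
  have h1 : HasDerivAt (fun t : ℝ => (p.1, t)) ((0 : ℝ), (1 : ℝ)) p.2 :=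
    (hasDerivAt_const p.2 p.1).prodMk (hasDerivAt_id p.2)
  exact HasFDerivAt.comp_hasDerivAt (f := fun t : ℝ => (p.1, t)) p.2 h.hasFDerivAt h1

lemma differentiableAt_of_smooth (hΩ : IsOpen Ω) (hf : ContDiffOn ℝ ∞ f Ω) (hp : p ∈ Ω) :
    DifferentiableAt ℝ f p :=
  (hf.contDiffAt (hΩ.mem_nhds hp)).differentiableAt (by simp)

lemma pdu_eq_fderiv (h : DifferentiableAt ℝ f p) : pdu f p = fderiv ℝ f p (1, 0) :=
  (hasDerivAt_slice_u h).deriv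

lemma pdv_eq_fderiv (h : DifferentiableAt ℝ f p) : pdv f p = fderiv ℝ f p (0, 1) :=
  (hasDerivAt_slice_v h).deriv

lemma hasDerivAt_pdu (hΩ : IsOpen Ω) (hf : ContDiffOn ℝ ∞ f Ω) (hp : p ∈ Ω) :
    HasDerivAt (fun t => f (t, p.2)) (pdu f p) p.1 := by
  have h := differentiableAt_of_smooth hΩ hf hp
  rw [pdu_eq_fderiv h]
  exact hasDerivAt_slice_u h

lemma hasDerivAt_pdv (hΩ : IsOpen Ω) (hf : ContDiffOn ℝ ∞ f Ω) (hp : p ∈ Ω) :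
    HasDerivAt (fun t => f (p.1, t)) (pdv f p) p.2 := by
  have h := differentiableAt_of_smooth hΩ hf hp
  rw [pdv_eq_fderiv h]
  exact hasDerivAt_slice_v h

lemma contDiffOn_pdu (hΩ : IsOpen Ω) (hf : ContDiffOn ℝ ∞ f Ω) :
    ContDiffOn ℝ ∞ (pdu f) Ω := by
  have h : ContDiffOn ℝ ∞ (fderiv ℝ f) Ω := hf.fderiv_of_isOpen hΩ (by simp)
  exact (h.clm_apply contDiffOn_const).congr
    fun q hq => pdu_eq_fderiv (differentiableAt_of_smooth hΩ hf hq)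

lemma contDiffOn_pdv (hΩ : IsOpen Ω) (hf : ContDiffOn ℝ ∞ f Ω) :
    ContDiffOn ℝ ∞ (pdv f) Ω := by
  have h : ContDiffOn ℝ ∞ (fderiv ℝ f) Ω := hf.fderiv_of_isOpen hΩ (by simp)
  exact (h.clm_apply contDiffOn_const).congr
    fun q hq => pdv_eq_fderiv (differentiableAt_of_smooth hΩ hf hq)

lemma pdu_congr (hΩ : IsOpen Ω) (hfg : ∀ q ∈ Ω, f q = g q) (hp : p ∈ Ω) :
    pdu f p = pdu g p := by
  refine Filter.EventuallyEq.deriv_eq ?_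
  have hc : Continuous fun t : ℝ => (t, p.2) := by fun_prop
  filter_upwards [hc.continuousAt.preimage_mem_nhds (hΩ.mem_nhds hp)] with t ht
  exact hfg _ ht

lemma pdv_congr (hΩ : IsOpen Ω) (hfg : ∀ q ∈ Ω, f q = g q) (hp : p ∈ Ω) :
    pdv f p = pdv g p := by
  refine Filter.EventuallyEq.deriv_eq ?_
  have hc : Continuous fun t : ℝ => (p.1, t) := by fun_prop
  filter_upwards [hc.continuousAt.preimage_mem_nhds (hΩ.mem_nhds hp)] with t ht
  exact hfg _ ht

/-- Schwarz's theorem for the partial derivatives `pdu` and `pdv`. -/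
lemma pdv_pdu_comm (hΩ : IsOpen Ω) (hf : ContDiffOn ℝ ∞ f Ω) (hp : p ∈ Ω) :
    pdv (pdu f) p = pdu (pdv f) p := by
  have hfp := hf.contDiffAt (hΩ.mem_nhds hp)
  have h : DifferentiableAt ℝ (fderiv ℝ f) p :=
    ((hf.fderiv_of_isOpen hΩ (m := ∞) (by simp)).contDiffAt
      (hΩ.mem_nhds hp)).differentiableAt (by simp)
  have hsymm : IsSymmSndFDerivAt ℝ f p := hfp.isSymmSndFDerivAt (by simpa using WithTop.coe_le_coe.2 (le_top : (2 : ℕ∞) ≤ ⊤))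
  have key (w : ℝ × ℝ) : HasFDerivAt (fun q => fderiv ℝ f q w)
      ((fderiv ℝ (fderiv ℝ f) p).flip w) p := by
    simpa using h.hasFDerivAt.clm_apply (hasFDerivAt_const w p)
  rw [pdv_congr hΩ (fun q hq => pdu_eq_fderiv (differentiableAt_of_smooth hΩ hf hq)) hp,
    pdu_congr hΩ (fun q hq => pdv_eq_fderiv (differentiableAt_of_smooth hΩ hf hq)) hp,
    pdv_eq_fderiv (key _).differentiableAt, pdu_eq_fderiv (key _).differentiableAt,
    (key _).fderiv, (key _).fderiv]
  exact hsymm _ _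

end PartialDerivatives

lemma hasDerivAt_tan_comp {x : ℝ → ℝ} {x' t : ℝ} (hx : HasDerivAt x x' t)
    (hc : cos (x t) ≠ 0) : HasDerivAt (fun t => tan (x t)) (x' / cos (x t) ^ 2) t := by
  have h := (hasDerivAt_tan hc).comp t hx
  rw [one_div_mul_eq_div] at h
  exact h

lemma hasDerivAt_log_abs_tan {x : ℝ → ℝ} {x' t : ℝ} (hx : HasDerivAt x x' t)
    (hs : sin (x t) ≠ 0) (hc : cos (x t) ≠ 0) :
    HasDerivAt (fun t => log |tan (x t)|) (x' / (sin (x t) * cos (x t))) t := by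
  have ht : tan (x t) ≠ 0 := by rw [tan_eq_sin_div_cos]; exact div_ne_zero hs hc
  simp only [log_abs]
  convert (hasDerivAt_tan_comp hx hc).log ht using 1
  rw [tan_eq_sin_div_cos]
  field_simp

/-- the identity `2R = 2R̃ + (C₂ᵘ)_v + (C₂ᵛ)_u - (ln G²)_{uv}` from the
proof of the six-invariants proposition. -/
theorem invariant_R_identity
    (Ω : Set (ℝ × ℝ)) (hΩ : IsOpen Ω)
    (θ Λu Λv κu κv : ℝ × ℝ → ℝ)
    (hθ : ContDiffOn ℝ ∞ θ Ω) (hθrange : ∀ p ∈ Ω, θ p ∈ Set.Ioo 0 π)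
    (hθhalf : ∀ p ∈ Ω, θ p ≠ π / 2)
    (hΛu : ContDiffOn ℝ ∞ Λu Ω) (hΛv : ContDiffOn ℝ ∞ Λv Ω)
    (hκu : ContDiffOn ℝ ∞ κu Ω) (hκv : ContDiffOn ℝ ∞ κv Ω)
    (hκupos : ∀ p ∈ Ω, 0 < κu p) (hκvpos : ∀ p ∈ Ω, 0 < κv p)
    (ρ C2u C2v R Rt : ℝ × ℝ → ℝ)
    (hρ : ρ = fun p => Real.log |Real.tan (θ p)|)
    (hC2u : C2u = fun p => pdu κu p / κu p + 2 * Λu p)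
    (hC2v : C2v = fun p => pdv κv p / κv p + 2 * Λv p)
    (hR : R = fun p => pdu (pdv ρ) p + Real.cos (θ p) ^ 2 * pdu ρ p * pdv ρ p
      - Λv p * pdu ρ p - Λu p * pdv ρ p)
    (hRt : Rt = fun p => (Real.cos (θ p) / Real.sin (θ p)) *
      (pdu (fun q => -(Real.tan (θ q) * Λv q)) p
        - pdv (fun q => Real.tan (θ q) * Λu q - pdu θ q) p)) :
    ∀ p ∈ Ω,
      2 * R p = 2 * Rt p + pdv C2u p + pdu C2v p
        - pdu (pdv (fun q => Real.log (Real.cos (θ q) ^ 2 * κu q * κv q))) p := by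
  intro p hp
  subst hρ hC2u hC2v hR hRt
  have hs (q) (hq : q ∈ Ω) : sin (θ q) ≠ 0 :=
    (sin_pos_of_pos_of_lt_pi (hθrange q hq).1 (hθrange q hq).2).ne'
  have hc (q) (hq : q ∈ Ω) : cos (θ q) ≠ 0 := by
    intro h
    have hr := hθrange q hq
    refine hθhalf q hq (injOn_cos ⟨hr.1.le, hr.2.le⟩ ⟨?_, ?_⟩ ?_)
    · positivity
    · linarith [pi_pos]
    · rw [h, cos_pi_div_two]
  have hκu0 (q) (hq : q ∈ Ω) : κu q ≠ 0 := (hκupos q hq).ne'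
  have hκv0 (q) (hq : q ∈ Ω) : κv q ≠ 0 := (hκvpos q hq).ne'
  have θu := hasDerivAt_pdu hΩ hθ hp
  have θv := hasDerivAt_pdv hΩ hθ hp
  have θvu := hasDerivAt_pdu hΩ (contDiffOn_pdv hΩ hθ) hp
  have θuv := hasDerivAt_pdv hΩ (contDiffOn_pdu hΩ hθ) hp
  have hs0 := hs p hp
  have hc0 := hc p hp
  have hu0 := hκu0 p hp
  have hv0 := hκv0 p hp
  have ρu : pdu (fun p => log |tan (θ p)|) p = pdu θ p / (sin (θ p) * cos (θ p)) :=
    (hasDerivAt_log_abs_tan θu hs0 hc0).deriv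
  have ρv (q) (hq : q ∈ Ω) :
      pdv (fun p => log |tan (θ p)|) q = pdv θ q / (sin (θ q) * cos (θ q)) :=
    (hasDerivAt_log_abs_tan (hasDerivAt_pdv hΩ hθ hq) (hs q hq) (hc q hq)).deriv
  have ρvu : pdu (pdv fun p => log |tan (θ p)|) p = _ :=
    (pdu_congr hΩ ρv hp).trans (θvu.fun_div (θu.sin.fun_mul θu.cos) (mul_ne_zero hs0 hc0)).deriv
  have Gv (q) (hq : q ∈ Ω) : pdv (fun q => log (cos (θ q) ^ 2 * κu q * κv q)) q =
      -2 * (sin (θ q) / cos (θ q) * pdv θ q) + pdv κu q / κu q + pdv κv q / κv q := by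
    have hcq := hc q hq
    have huq := hκu0 q hq
    have hvq := hκv0 q hq
    refine (((((hasDerivAt_pdv hΩ hθ hq).cos.fun_pow 2).fun_mul (hasDerivAt_pdv hΩ hκu hq)).fun_mul
      (hasDerivAt_pdv hΩ hκv hq)).log
        (mul_ne_zero (mul_ne_zero (pow_ne_zero 2 hcq) huq) hvq)).deriv.trans ?_
    simp only [Prod.mk.eta]
    field_simp
    ring
  have Gvu : pdu (pdv fun q => log (cos (θ q) ^ 2 * κu q * κv q)) p = _ :=
    (pdu_congr hΩ Gv hp).trans
      (((((θu.sin.fun_div θu.cos hc0).fun_mul θvu).const_mul (-2)).fun_add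
        ((hasDerivAt_pdu hΩ (contDiffOn_pdv hΩ hκu) hp).fun_div (hasDerivAt_pdu hΩ hκu hp) hu0)).fun_add
        ((hasDerivAt_pdu hΩ (contDiffOn_pdv hΩ hκv) hp).fun_div (hasDerivAt_pdu hΩ hκv hp) hv0)).deriv
  have Cuv : pdv (fun p => pdu κu p / κu p + 2 * Λu p) p = _ :=
    (((hasDerivAt_pdv hΩ (contDiffOn_pdu hΩ hκu) hp).fun_div (hasDerivAt_pdv hΩ hκu hp) hu0).fun_add
      ((hasDerivAt_pdv hΩ hΛu hp).const_mul 2)).deriv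
  have Cvu : pdu (fun p => pdv κv p / κv p + 2 * Λv p) p = _ :=
    (((hasDerivAt_pdu hΩ (contDiffOn_pdv hΩ hκv) hp).fun_div (hasDerivAt_pdu hΩ hκv hp) hv0).fun_add
      ((hasDerivAt_pdu hΩ hΛv hp).const_mul 2)).deriv
  have Tu : pdu (fun q => -(tan (θ q) * Λv q)) p = _ :=
    ((hasDerivAt_tan_comp θu hc0).fun_mul (hasDerivAt_pdu hΩ hΛv hp)).fun_neg.deriv
  have Tv : pdv (fun q => tan (θ q) * Λu q - pdu θ q) p = _ :=
    (((hasDerivAt_tan_comp θv hc0).fun_mul (hasDerivAt_pdv hΩ hΛu hp)).fun_sub θuv).deriv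
  beta_reduce
  rw [ρvu, Gvu, Cuv, Cvu, Tu, Tv, ρu, ρv p hp]
  simp only [Prod.mk.eta, pdv_pdu_comm hΩ hθ hp, pdv_pdu_comm hΩ hκu hp, tan_eq_sin_div_cos]
  have hsc := sin_sq (θ p)
  generalize sin (θ p) = s at *
  generalize cos (θ p) = c at *
  field_simp
  simp only [hsc]
  linear_combination (-2 * κu p ^ 2 * κv p ^ 2 * (pdu (pdv θ) p * s * c + pdu θ p * pdv θ p)) * hsc
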